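/- Let w be a non-increasing positive function on I=(0,a), 0<a≤∞, with W(t)=∫₀ᵗ w dm finite on I. For a measurable function f on I, define A(f) = inf{ ∫_I |g|·w dm + ess sup|h| : g, h measurable on I, f*/w = g + h a.e. } (the norm of f*/w in L₁+L∞ with respect to the measure w·dm) and B(f) = inf{ ∫_I |u| dm + C : u measurable, C ≥ 0, f = u + v a.e. for some measurable v with v*(t) ≤ C·w(t) for all t∈I }. Then A(f) = B(f) for every measurable f on I (equality in [0,∞]). -/

import Mathlib

open MeasureTheory Set Filter
open scoped ENNReal

/-- The interval `(0, a)` for `a : ℝ≥0∞` (equals `(0,∞)` when `a = ∞`). -/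
def Iset (a : ℝ≥0∞) : Set ℝ := {x : ℝ | 0 < x ∧ ENNReal.ofReal x < a}

/-- Lebesgue measure restricted to the interval `(0,a)`. -/
noncomputable def volI (a : ℝ≥0∞) : Measure ℝ := volume.restrict (Iset a)

/-- Decreasing rearrangement of an `ℝ≥0∞`-valued function with respect to a measure `μ`:
`f^{*,μ}(t) = inf {s > 0 : μ({f > s}) ≤ t}`. -/
noncomputable def rearrE (μ : Measure ℝ) (f : ℝ → ℝ≥0∞) (t : ℝ) : ℝ≥0∞ :=
  sInf {s : ℝ≥0∞ | 0 < s ∧ μ {x | s < f x} ≤ ENNReal.ofReal t}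

/-- Decreasing rearrangement of a real function with respect to a measure `μ` on `ℝ`:
`f^{*,μ}(t) = inf {s > 0 : μ({|f| > s}) ≤ t}`. -/
noncomputable def rearr (μ : Measure ℝ) (f : ℝ → ℝ) (t : ℝ) : ℝ≥0∞ :=
  rearrE μ (fun x => ENNReal.ofReal |f x|) t

/-- The measure `w·dm` on the set `I`. -/
noncomputable def wMeas (I : Set ℝ) (w : ℝ → ℝ) : Measure ℝ :=
  (volume.restrict I).withDensity (fun t => ENNReal.ofReal (w t))

/-- `W(t) = ∫₀ᵗ w dm`. -/
noncomputable def Wfun (w : ℝ → ℝ) (t : ℝ) : ℝ := ∫ s in Set.Ioo (0:ℝ) t, w s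

/-- `b = ∫_I w dm` as an extended real number. -/
noncomputable def bval (a : ℝ≥0∞) (w : ℝ → ℝ) : ℝ≥0∞ := ∫⁻ x in Iset a, ENNReal.ofReal (w x)

/-- `A(f)`: the norm of `f*/w` in `L₁+L∞` with respect to the measure `ω = w·dm` on `I`:
the infimum of `∫_I |g| w dm + ess sup |h|` over decompositions `f*/w = g + h` a.e. on `I`. -/
noncomputable def Anorm (a : ℝ≥0∞) (w f : ℝ → ℝ) : ℝ≥0∞ :=
  sInf {c : ℝ≥0∞ | ∃ g h : ℝ → ℝ, Measurable g ∧ Measurable h ∧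
    (∀ᵐ t ∂(volI a), 0 ≤ g t + h t ∧
      rearr (volI a) f t / ENNReal.ofReal (w t) = ENNReal.ofReal (g t + h t)) ∧
    c = (∫⁻ t in Iset a, ENNReal.ofReal |g t| * ENNReal.ofReal (w t)) +
        essSup (fun t => ENNReal.ofReal |h t|) (wMeas (Iset a) w)}

/-- `B(f)`: the infimum of `∫_I |u| dm + C` over decompositions `f = u + v` a.e. with
`v*(t) ≤ C·w(t)` for all `t ∈ I`. -/
noncomputable def Bnorm (a : ℝ≥0∞) (w f : ℝ → ℝ) : ℝ≥0∞ :=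
  sInf {c : ℝ≥0∞ | ∃ u v : ℝ → ℝ, ∃ C : ℝ, Measurable u ∧ Measurable v ∧ 0 ≤ C ∧
    (∀ᵐ x ∂(volI a), f x = u x + v x) ∧
    (∀ t ∈ Iset a, rearr (volI a) v t ≤ ENNReal.ofReal (C * w t)) ∧
    c = (∫⁻ x in Iset a, ENNReal.ofReal |u x|) + ENNReal.ofReal C}

/-!
For `C ≥ 0` let `cost C = C + ∫ (f* - C w)⁺`; both gauges equal `⨅ C, cost C`. For `f*/w` this
is truncation at the level `C`. For `f` itself, `∫ |f - v| ≥ ∫ (f* - v*)⁺ ≥ ∫ (f* - C w)⁺`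
whenever `v* ≤ C w`, by comparing the distribution functions of `f` and `v` at each height. To
attain this bound, sort the points of `I` by decreasing `|f|`, breaking ties by position, and
let the rank of `x` be the measure of the points before it. Cutting `f` off at `C w (rank)`
gives `v` with `v* ≤ C w`, and at each height `s` the set where the cutoff is at most `s < |f|`
lies among the points of `{|f| > s}` whose rank is at least some `τ`; these have measure at most
`μ {|f| > s} - τ`.
-/

open OrderDual
open scoped Function NNReal

/-- Every subset of `β` has a countable cofinal subset. This replaces second countability of the
order topology, which does not pass to lexicographic products. -/
def HasCountableCofinalSubsets (β : Type*) [LE β] : Prop :=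
  ∀ T : Set β, ∃ S ⊆ T, S.Countable ∧ IsCofinalFor T S

namespace HasCountableCofinalSubsets

variable {β γ : Type*}

theorem of_secondCountableTopology [LinearOrder β] [TopologicalSpace β] [OrderTopology β]
    [SecondCountableTopology β] : HasCountableCofinalSubsets β := by
  intro T
  obtain ⟨S, hST, hS, hcover⟩ :=
    TopologicalSpace.isOpen_biUnion_countable T Iio fun _ _ => isOpen_Iio
  -- Only a maximum of `T` can fail to lie strictly below some point of `S`.
  refine ⟨S ∪ {b ∈ T | IsGreatest T b}, union_subset hST (sep_subset _ _),
    hS.union (Subsingleton.countable fun b hb c hc => hb.2.unique hc.2), fun b hb => ?_⟩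
  by_cases hmax : IsGreatest T b
  · exact ⟨b, .inr ⟨hb, hmax⟩, le_rfl⟩
  · obtain ⟨c, hc, hbc⟩ : ∃ c ∈ T, b < c := by
      simpa [IsGreatest, hb, mem_upperBounds] using hmax
    have hb_mem : b ∈ ⋃ i ∈ S, Iio i := hcover ▸ mem_biUnion hc hbc
    obtain ⟨i, hi, hbi⟩ := mem_iUnion₂.1 hb_mem
    exact ⟨i, .inl hi, hbi.le⟩

theorem map [Preorder β] [Preorder γ] (hβ : HasCountableCofinalSubsets β) {f : β → γ}
    (hf : Monotone f) (hf_surj : Function.Surjective f) : HasCountableCofinalSubsets γ := by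
  intro T
  obtain ⟨S, hST, hS, hS_cofinal⟩ := hβ (f ⁻¹' T)
  refine ⟨f '' S, image_subset_iff.2 hST, hS.image f, fun c hc => ?_⟩
  obtain ⟨b, rfl⟩ := hf_surj c
  obtain ⟨b', hb', hle⟩ := hS_cofinal hc
  exact ⟨f b', mem_image_of_mem f hb', hf hle⟩

theorem lex [PartialOrder β] [Preorder γ] (hβ : HasCountableCofinalSubsets β)
    (hγ : HasCountableCofinalSubsets γ) : HasCountableCofinalSubsets (β ×ₗ γ) := by
  intro T
  obtain ⟨B, hBT, hB, hB_cofinal⟩ := hβ ((fun p => (ofLex p).1) '' T)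
  choose C hCT hC hC_cofinal using fun b => hγ {c | toLex (b, c) ∈ T}
  refine ⟨⋃ b ∈ B, (fun c => toLex (b, c)) '' C b, ?_, hB.biUnion fun b _ => (hC b).image _,
    fun p hp => ?_⟩
  · exact iUnion₂_subset fun b _ => image_subset_iff.2 (hCT b)
  · obtain ⟨b, hb, hpb⟩ := hB_cofinal (mem_image_of_mem _ hp)
    rcases hpb.lt_or_eq with hlt | rfl
    · obtain ⟨q, hq, rfl⟩ := hBT hb
      obtain ⟨c, hc, -⟩ := hC_cofinal _ (show (ofLex q).2 ∈ _ from hq)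
      exact ⟨_, mem_biUnion hb (mem_image_of_mem _ hc), Prod.Lex.toLex_le_toLex.2 (.inl hlt)⟩
    · obtain ⟨c, hc, hpc⟩ := hC_cofinal _ (show (ofLex p).2 ∈ _ from hp)
      exact ⟨_, mem_biUnion hb (mem_image_of_mem _ hc),
        Prod.Lex.toLex_le_toLex.2 (.inr ⟨rfl, hpc⟩)⟩

theorem dual_lex [PartialOrder β] [Preorder γ] (hβ : HasCountableCofinalSubsets βᵒᵈ)
    (hγ : HasCountableCofinalSubsets γᵒᵈ) : HasCountableCofinalSubsets (β ×ₗ γ)ᵒᵈ := by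
  let e : βᵒᵈ ×ₗ γᵒᵈ → (β ×ₗ γ)ᵒᵈ := fun p =>
    toDual (toLex (ofDual (ofLex p).1, ofDual (ofLex p).2))
  have he_mono : Monotone e := fun p q hpq => by
    rcases Prod.Lex.le_iff.1 hpq with h | ⟨h₁, h₂⟩
    · exact Prod.Lex.toLex_le_toLex.2 (.inl h)
    · exact Prod.Lex.toLex_le_toLex.2 (.inr ⟨congrArg ofDual h₁.symm, h₂⟩)
  exact (hβ.lex hγ).map he_mono fun p => ⟨toLex (toDual (ofDual p).1, toDual (ofDual p).2), rfl⟩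

end HasCountableCofinalSubsets

section MeasureRank

variable {α γ : Type*} [MeasurableSpace α] [LinearOrder γ]

/-- The rank of `x` among the points of a measure space sorted by increasing `key`: the measure of
the set of points that come strictly before `x`. -/
noncomputable def measureRank (μ : Measure α) (key : α → γ) (x : α) : ℝ≥0∞ :=
  μ {y | key y < key x}

variable {μ : Measure α} {key : α → γ}

theorem measurable_measureRank [SFinite μ] (hkey : MeasurableSet {p : α × α | key p.2 < key p.1}) :
    Measurable (measureRank μ key) :=
  measurable_measure_prodMk_left hkey

theorem measure_measureRank_le_le [NullSingletonClass μ] (hinj : Function.Injective key)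
    (hcof : HasCountableCofinalSubsets γ) (t : ℝ≥0∞) :
    μ {x | measureRank μ key x ≤ t} ≤ t := by
  obtain ⟨S, hST, hS, hS_cofinal⟩ := hcof (key '' {x | measureRank μ key x ≤ t})
  have hcover : {x | measureRank μ key x ≤ t} ⊆ ⋃ c ∈ S, {y | key y ≤ c} := fun x hx => by
    obtain ⟨c, hc, hxc⟩ := hS_cofinal (mem_image_of_mem key hx)
    exact mem_biUnion hc hxc
  have hdirected : DirectedOn ((· ⊆ ·) on fun c => {y | key y ≤ c}) S := fun c hc d hd =>
    ⟨max c d, by rcases max_choice c d with h | h <;> rwa [h],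
      fun _ hy => le_max_of_le_left hy, fun _ hy => le_max_of_le_right hy⟩
  refine (measure_mono hcover).trans ?_
  rw [measure_biUnion_eq_iSup hS hdirected]
  refine iSup₂_le fun c hc => ?_
  obtain ⟨x, hx, rfl⟩ := hST hc
  have hinsert : {y | key y ≤ key x} = insert x {y | key y < key x} := by
    ext y
    simp [le_iff_eq_or_lt, hinj.eq_iff]
  rw [hinsert, measure_congr (insert_ae_eq_self x _)]
  exact hx

/-- The measure of `E` after `x` is `μ E` minus the rank of `x`, so this is
`measure_measureRank_le_le` for the reversed order. -/
theorem measure_inter_le_measureRank_le [NullSingletonClass μ] (hinj : Function.Injective key)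
    (hcof : HasCountableCofinalSubsets γᵒᵈ)
    (hkey : ∀ x, MeasurableSet {y | key y < key x}) {E : Set α} (hE : MeasurableSet E)
    (hE_initial : ∀ x ∈ E, ∀ y, key y < key x → y ∈ E) (hE_fin : μ E ≠ ∞) (τ : ℝ≥0∞) :
    μ (E ∩ {x | τ ≤ measureRank μ key x}) ≤ μ E - τ := by
  have hreverse (x : α) (hx : x ∈ E) (hτ : τ ≤ measureRank μ key x) :
      measureRank (μ.restrict E) (toDual ∘ key) x ≤ μ E - τ := by
    have hsub : {y | key y < key x} ⊆ E := fun y hy => hE_initial x hx y hy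
    calc μ.restrict E {y | key x < key y}
        ≤ μ.restrict E {y | key y < key x}ᶜ := measure_mono fun y hy => not_lt_of_gt hy
      _ = μ (E \ {y | key y < key x}) := by
          rw [Measure.restrict_apply (hkey x).compl, inter_comm, sdiff_eq]
      _ = μ E - measureRank μ key x :=
          measure_sdiff hsub (hkey x).nullMeasurableSet
            (ne_top_of_le_ne_top hE_fin (measure_mono hsub))
      _ ≤ μ E - τ := tsub_le_tsub_left hτ _
  rw [inter_comm, ← Measure.restrict_apply' hE]
  calc μ.restrict E {x | τ ≤ measureRank μ key x}
      ≤ μ.restrict E {x | measureRank (μ.restrict E) (toDual ∘ key) x ≤ μ E - τ} := by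
        refine measure_mono_ae ?_
        filter_upwards [ae_restrict_mem hE] with x hx hτ using hreverse x hx hτ
    _ ≤ μ E - τ := measure_measureRank_le_le (OrderDual.toDual.injective.comp hinj) hcof _

end MeasureRank

section DecreasingRearrangement

variable {α : Type*} [MeasurableSpace α]

/-- The decreasing rearrangement of `F`, as a function of an extended nonnegative real: it is the
generalized inverse of the distribution function `s ↦ μ {x | s < F x}`. -/
noncomputable def decreasingRearrangement (μ : Measure α) (F : α → ℝ≥0∞) (t : ℝ≥0∞) : ℝ≥0∞ :=
  sInf {s | μ {x | s < F x} ≤ t}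

variable {μ : Measure α} {F : α → ℝ≥0∞}

theorem antitone_decreasingRearrangement : Antitone (decreasingRearrangement μ F) :=
  fun _ _ htu => sInf_le_sInf fun _ hs => hs.trans htu

theorem measure_decreasingRearrangement_lt_le (t : ℝ≥0∞) :
    μ {x | decreasingRearrangement μ F t < F x} ≤ t := by
  have hne : {s | μ {x | s < F x} ≤ t}.Nonempty := ⟨⊤, by simp⟩
  obtain ⟨u, hu_anti, hu_tendsto, hu⟩ := exists_seq_tendsto_sInf hne (OrderBot.bddBelow _)
  have hcover : {x | decreasingRearrangement μ F t < F x} ⊆ ⋃ n, {x | u n < F x} := fun x hx =>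
    mem_iUnion.2 (hu_tendsto.eventually_lt_const hx).exists
  have hmono : Monotone fun n => {x | u n < F x} := fun _ _ hij _ hx => (hu_anti hij).trans_lt hx
  refine (measure_mono hcover).trans ?_
  rw [hmono.measure_iUnion]
  exact iSup_le hu

theorem decreasingRearrangement_le_iff {s t : ℝ≥0∞} :
    decreasingRearrangement μ F t ≤ s ↔ μ {x | s < F x} ≤ t :=
  ⟨fun h => (measure_mono fun _ hx => h.trans_lt hx).trans
    (measure_decreasingRearrangement_lt_le t), fun h => sInf_le h⟩

theorem lt_decreasingRearrangement_iff {s t : ℝ≥0∞} :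
    s < decreasingRearrangement μ F t ↔ t < μ {x | s < F x} := by
  simpa only [not_le] using decreasingRearrangement_le_iff.not

theorem rearrE_eq_decreasingRearrangement (μ : Measure ℝ) (F : ℝ → ℝ≥0∞) (t : ℝ) :
    rearrE μ F t = decreasingRearrangement μ F (ENNReal.ofReal t) := by
  refine le_antisymm (le_of_forall_gt fun s hs => ?_) (sInf_le_sInf fun s hs => hs.2)
  obtain ⟨r, hr, hrs⟩ := exists_between hs
  have hr_mem : r ∈ {s | 0 < s ∧ μ {x | s < F x} ≤ ENNReal.ofReal t} :=
    ⟨bot_le.trans_lt hr, decreasingRearrangement_le_iff.1 hr.le⟩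
  exact (sInf_le hr_mem).trans_lt hrs

theorem measurable_rearrE (μ : Measure ℝ) (F : ℝ → ℝ≥0∞) : Measurable (rearrE μ F) := by
  rw [funext (rearrE_eq_decreasingRearrangement μ F)]
  exact antitone_decreasingRearrangement.measurable.comp ENNReal.measurable_ofReal

theorem rearrE_le_iff {μ : Measure ℝ} {F : ℝ → ℝ≥0∞} {s : ℝ≥0∞} {t : ℝ} :
    rearrE μ F t ≤ s ↔ μ {x | s < F x} ≤ ENNReal.ofReal t := by
  rw [rearrE_eq_decreasingRearrangement, decreasingRearrangement_le_iff]

end DecreasingRearrangement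

section LayerCake

theorem volume_restrict_Ioi_preimage_ofReal {b c : ℝ≥0∞} {S : Set ℝ≥0∞} (hS : Ioo b c ⊆ S)
    (hS' : S ⊆ Icc b c) : volume.restrict (Ioi (0 : ℝ)) (ENNReal.ofReal ⁻¹' S) = c - b := by
  rcases eq_or_ne b ⊤ with rfl | hb
  · have hempty : ENNReal.ofReal ⁻¹' S = ∅ :=
      eq_empty_of_forall_notMem fun t ht => ENNReal.ofReal_lt_top.not_ge (hS' ht).1
    simp [hempty]
  rw [Measure.restrict_apply' measurableSet_Ioi]
  have hpos {t : ℝ} (ht : b.toReal < t) : 0 < t := ENNReal.toReal_nonneg.trans_lt ht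
  rcases eq_or_ne c ⊤ with rfl | hc
  · have hsub : Ioi b.toReal ⊆ ENNReal.ofReal ⁻¹' S ∩ Ioi 0 := fun t ht =>
      ⟨hS ⟨(ENNReal.lt_ofReal_iff_toReal_lt hb).2 ht, ENNReal.ofReal_lt_top⟩, hpos ht⟩
    rw [ENNReal.top_sub hb]
    exact measure_mono_top hsub Real.volume_Ioi
  · have hlower : Ioo b.toReal c.toReal ⊆ ENNReal.ofReal ⁻¹' S ∩ Ioi 0 := fun t ⟨hbt, htc⟩ =>
      ⟨hS ⟨(ENNReal.lt_ofReal_iff_toReal_lt hb).2 hbt,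
        (ENNReal.ofReal_lt_iff_lt_toReal (hpos hbt).le hc).2 htc⟩, hpos hbt⟩
    have hupper : ENNReal.ofReal ⁻¹' S ∩ Ioi 0 ⊆ Icc b.toReal c.toReal := fun t ⟨ht, ht_pos⟩ =>
      ⟨(ENNReal.le_ofReal_iff_toReal_le hb (le_of_lt ht_pos)).1 (hS' ht).1,
        (ENNReal.ofReal_le_iff_le_toReal hc).1 (hS' ht).2⟩
    have hlength : ENNReal.ofReal (c.toReal - b.toReal) = c - b := by
      rw [ENNReal.ofReal_sub _ ENNReal.toReal_nonneg, ENNReal.ofReal_toReal hb,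
        ENNReal.ofReal_toReal hc]
    refine le_antisymm ((measure_mono hupper).trans_eq ?_) (le_trans ?_ (measure_mono hlower))
    · rw [Real.volume_Icc, hlength]
    · rw [Real.volume_Ioo, hlength]

variable {α : Type*} [MeasurableSpace α]

theorem lintegral_tsub_eq_lintegral_measure_mem_Ico (μ : Measure α) [SFinite μ] {F G : α → ℝ≥0∞}
    (hF : Measurable F) (hG : Measurable G) :
    ∫⁻ x, (F x - G x) ∂μ =
      ∫⁻ s in Ioi (0 : ℝ), μ {x | ENNReal.ofReal s ∈ Ico (G x) (F x)} := by
  let R : Set (α × ℝ) := {p | ENNReal.ofReal p.2 ∈ Ico (G p.1) (F p.1)}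
  have hR : MeasurableSet R := by measurability
  calc ∫⁻ x, (F x - G x) ∂μ
      = ∫⁻ x, volume.restrict (Ioi (0 : ℝ)) (ENNReal.ofReal ⁻¹' Ico (G x) (F x)) ∂μ :=
        lintegral_congr fun x =>
          (volume_restrict_Ioi_preimage_ofReal Ioo_subset_Ico_self Ico_subset_Icc_self).symm
    _ = (μ.prod (volume.restrict (Ioi (0 : ℝ)))) R := (Measure.prod_apply hR).symm
    _ = ∫⁻ s in Ioi (0 : ℝ), μ {x | ENNReal.ofReal s ∈ Ico (G x) (F x)} :=
        Measure.prod_apply_symm hR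

end LayerCake

theorem lintegral_decreasingRearrangement_tsub_le {α : Type*} [MeasurableSpace α] {μ : Measure α}
    [SFinite μ] {F G : α → ℝ≥0∞} (hF : Measurable F) (hG : Measurable G) :
    ∫⁻ t in Ioi (0 : ℝ), (decreasingRearrangement μ F (ENNReal.ofReal t) -
        decreasingRearrangement μ G (ENNReal.ofReal t)) ≤
      ∫⁻ x, (F x - G x) ∂μ := by
  have hmeas (H : α → ℝ≥0∞) :
      Measurable fun t : ℝ => decreasingRearrangement μ H (ENNReal.ofReal t) :=
    antitone_decreasingRearrangement.measurable.comp ENNReal.measurable_ofReal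
  rw [lintegral_tsub_eq_lintegral_measure_mem_Ico _ (hmeas F) (hmeas G),
    lintegral_tsub_eq_lintegral_measure_mem_Ico μ hF hG]
  refine lintegral_mono fun s => ?_
  simp only [mem_Ico, decreasingRearrangement_le_iff, lt_decreasingRearrangement_iff]
  calc volume.restrict (Ioi (0 : ℝ)) (ENNReal.ofReal ⁻¹'
        Ico (μ {x | ENNReal.ofReal s < G x}) (μ {x | ENNReal.ofReal s < F x}))
      = μ {x | ENNReal.ofReal s < F x} - μ {x | ENNReal.ofReal s < G x} :=
        volume_restrict_Ioi_preimage_ofReal Ioo_subset_Ico_self Ico_subset_Icc_self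
    _ ≤ μ ({x | ENNReal.ofReal s < F x} \ {x | ENNReal.ofReal s < G x}) := le_measure_sdiff
    _ ≤ μ {x | G x ≤ ENNReal.ofReal s ∧ ENNReal.ofReal s < F x} :=
        measure_mono fun x hx => ⟨not_lt.1 hx.2, hx.1⟩

section DecreasingRank

variable {α : Type*}

/-- The key that sorts points by decreasing value of `F`, ties being broken by position. -/
def decreasingKey (F : α → ℝ≥0∞) (x : α) : ℝ≥0∞ᵒᵈ ×ₗ α :=
  toLex (toDual (F x), x)

theorem decreasingKey_injective (F : α → ℝ≥0∞) : Function.Injective (decreasingKey F) :=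
  fun _ _ h => congrArg (fun p => (ofLex p).2) h

variable [LinearOrder α]

theorem decreasingKey_lt_iff {F : α → ℝ≥0∞} {x y : α} :
    decreasingKey F y < decreasingKey F x ↔ F x < F y ∨ F y = F x ∧ y < x :=
  Prod.Lex.toLex_lt_toLex

variable [MeasurableSpace α]

/-- The rank of `x` for the order of decreasing values of `F`. It takes the place of a
measure-preserving map that carries the decreasing rearrangement of `F` back to `F`. -/
noncomputable def decreasingRank (μ : Measure α) (F : α → ℝ≥0∞) : α → ℝ≥0∞ :=
  measureRank μ (decreasingKey F)

variable [TopologicalSpace α] [OrderTopology α] [SecondCountableTopology α] {μ : Measure α}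

theorem measure_decreasingRank_le_le [NullSingletonClass μ] (F : α → ℝ≥0∞) (t : ℝ≥0∞) :
    μ {x | decreasingRank μ F x ≤ t} ≤ t :=
  measure_measureRank_le_le (decreasingKey_injective F)
    (HasCountableCofinalSubsets.of_secondCountableTopology.lex .of_secondCountableTopology) t

variable [BorelSpace α] {F : α → ℝ≥0∞}

theorem measurableSet_decreasingKey_lt (hF : Measurable F) :
    MeasurableSet {p : α × α | decreasingKey F p.2 < decreasingKey F p.1} := by
  simp only [decreasingKey_lt_iff]
  measurability

theorem measurable_decreasingRank [SFinite μ] (hF : Measurable F) :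
    Measurable (decreasingRank μ F) :=
  measurable_measureRank (measurableSet_decreasingKey_lt hF)

theorem measure_lt_and_le_decreasingRank_le [NullSingletonClass μ] (hF : Measurable F)
    (s : ℝ≥0∞) {τ : ℝ≥0∞} (hτ : τ ≠ ∞) :
    μ {x | s < F x ∧ τ ≤ decreasingRank μ F x} ≤ μ {x | s < F x} - τ := by
  rcases eq_or_ne (μ {x | s < F x}) ∞ with h | h
  · simp [h, hτ]
  refine measure_inter_le_measureRank_le (decreasingKey_injective F)
    (HasCountableCofinalSubsets.dual_lex .of_secondCountableTopology .of_secondCountableTopology)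
    (fun x => (measurableSet_decreasingKey_lt hF).preimage measurable_prodMk_left)
    (measurableSet_lt measurable_const hF) (fun x hx y hyx => ?_) h τ
  rcases decreasingKey_lt_iff.1 hyx with hlt | ⟨heq, -⟩
  · exact hx.trans hlt
  · exact hx.trans_eq heq.symm

theorem measure_mem_Ico_comp_decreasingRank_le [NullSingletonClass μ] (hF : Measurable F)
    {k : ℝ≥0∞ → ℝ≥0∞} (hk : Antitone k) (hk_top : ⨅ r : ℝ≥0, k r ≤ k ∞) {s : ℝ≥0∞}
    (hs : s ≠ k ∞) :
    μ {x | s ∈ Ico (k (decreasingRank μ F x)) (F x)} ≤ volume.restrict (Ioi (0 : ℝ))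
      {t | s ∈ Ico (k (ENNReal.ofReal t)) (decreasingRearrangement μ F (ENNReal.ofReal t))} := by
  rcases hs.lt_or_gt with hlt | hgt
  · have hempty : {x | s ∈ Ico (k (decreasingRank μ F x)) (F x)} = ∅ :=
      eq_empty_of_forall_notMem fun x hx => hlt.not_ge ((hk le_top).trans hx.1)
    rw [hempty, measure_empty]
    exact bot_le
  obtain ⟨r, hr⟩ := iInf_lt_iff.1 (hk_top.trans_lt hgt)
  let τ := sInf {t | k t ≤ s}
  have hτ : τ ≠ ∞ := ne_top_of_le_ne_top ENNReal.coe_ne_top (sInf_le hr.le)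
  have hk_le {t : ℝ≥0∞} (ht : τ < t) : k t ≤ s := by
    obtain ⟨q, hq, hqt⟩ := sInf_lt_iff.1 ht
    exact (hk hqt.le).trans hq
  calc μ {x | s ∈ Ico (k (decreasingRank μ F x)) (F x)}
      ≤ μ {x | s < F x ∧ τ ≤ decreasingRank μ F x} :=
        measure_mono fun x hx => ⟨hx.2, sInf_le hx.1⟩
    _ ≤ μ {x | s < F x} - τ := measure_lt_and_le_decreasingRank_le hF s hτ
    _ = volume.restrict (Ioi (0 : ℝ)) (ENNReal.ofReal ⁻¹' Ioo τ (μ {x | s < F x})) :=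
        (volume_restrict_Ioi_preimage_ofReal Subset.rfl Ioo_subset_Icc_self).symm
    _ ≤ volume.restrict (Ioi (0 : ℝ)) {t | s ∈ Ico (k (ENNReal.ofReal t))
          (decreasingRearrangement μ F (ENNReal.ofReal t))} :=
        measure_mono fun t ht => mem_Ico.2 ⟨hk_le ht.1, lt_decreasingRearrangement_iff.2 ht.2⟩

theorem lintegral_tsub_comp_decreasingRank_le [SFinite μ] [NullSingletonClass μ] (hF : Measurable F)
    {k : ℝ≥0∞ → ℝ≥0∞} (hk : Antitone k) (hk_top : ⨅ r : ℝ≥0, k r ≤ k ∞) :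
    ∫⁻ x, (F x - k (decreasingRank μ F x)) ∂μ ≤
      ∫⁻ t in Ioi (0 : ℝ),
        (decreasingRearrangement μ F (ENNReal.ofReal t) - k (ENNReal.ofReal t)) := by
  rw [lintegral_tsub_eq_lintegral_measure_mem_Ico μ hF
      (G := fun x => k (decreasingRank μ F x)) (hk.measurable.comp (measurable_decreasingRank hF)),
    lintegral_tsub_eq_lintegral_measure_mem_Ico _
      (F := fun t : ℝ => decreasingRearrangement μ F (ENNReal.ofReal t))
      (G := fun t : ℝ => k (ENNReal.ofReal t))
      (antitone_decreasingRearrangement.measurable.comp ENNReal.measurable_ofReal)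
      (hk.measurable.comp ENNReal.measurable_ofReal)]
  have hne : ∀ᵐ s ∂volume.restrict (Ioi (0 : ℝ)), s ≠ (k ∞).toReal :=
    ae_restrict_of_ae (Measure.ae_ne volume _)
  refine lintegral_mono_ae ?_
  filter_upwards [hne, ae_restrict_mem measurableSet_Ioi] with s hs hs_pos
  refine measure_mem_Ico_comp_decreasingRank_le hF hk hk_top fun h => hs ?_
  rw [← h, ENNReal.toReal_ofReal (le_of_lt hs_pos)]

end DecreasingRank

section AntitoneEnvelope

/-- The largest antitone function on `[0, ∞]` that is dominated by `φ` on `s ⊆ [0, ∞)`. It extends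
an antitone function on an interval to the ranks, which may lie outside the interval. -/
noncomputable def antitoneEnvelope (φ : ℝ → ℝ≥0∞) (s : Set ℝ) (t : ℝ≥0∞) : ℝ≥0∞ :=
  ⨅ r ∈ s, ⨅ _ : ENNReal.ofReal r ≤ t, φ r

variable {φ : ℝ → ℝ≥0∞} {s : Set ℝ}

theorem antitone_antitoneEnvelope : Antitone (antitoneEnvelope φ s) := fun _ _ htu =>
  iInf₂_mono fun _ _ => le_iInf fun hr => iInf_le _ (hr.trans htu)

theorem antitoneEnvelope_le {r : ℝ} {t : ℝ≥0∞} (hr : r ∈ s) (hrt : ENNReal.ofReal r ≤ t) :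
    antitoneEnvelope φ s t ≤ φ r :=
  iInf₂_le_of_le r hr (iInf_le _ hrt)

theorem le_antitoneEnvelope_ofReal (hφ : AntitoneOn φ s) (hs : s ⊆ Ici 0) {t : ℝ}
    (ht : t ∈ s) : φ t ≤ antitoneEnvelope φ s (ENNReal.ofReal t) :=
  le_iInf₂ fun _ hr => le_iInf fun hrt =>
    hφ hr ht ((ENNReal.ofReal_le_ofReal_iff (hs ht)).1 hrt)

theorem iInf_antitoneEnvelope_coe_le_top :
    ⨅ r : ℝ≥0, antitoneEnvelope φ s r ≤ antitoneEnvelope φ s ∞ :=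
  le_iInf₂ fun r hr => le_iInf fun _ =>
    iInf_le_of_le r.toNNReal (antitoneEnvelope_le hr le_rfl)

end AntitoneEnvelope

section Truncation

theorem abs_max_neg_min_le {y m : ℝ} (hm : 0 ≤ m) : |max (-m) (min y m)| ≤ m :=
  abs_le.2 ⟨le_max_left _ _, max_le (neg_le_self hm) (min_le_right _ _)⟩

theorem abs_sub_max_neg_min {y m : ℝ} (hm : 0 ≤ m) (hmy : m ≤ |y|) :
    |y - max (-m) (min y m)| = |y| - m := by
  rcases le_total 0 y with hy | hy
  · rw [abs_of_nonneg hy] at hmy ⊢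
    rw [min_eq_right hmy, max_eq_right (neg_le_self hm), abs_of_nonneg (sub_nonneg.2 hmy)]
  · rw [abs_of_nonpos hy] at hmy ⊢
    rw [min_eq_left (hy.trans hm), max_eq_left (by linarith), abs_of_nonpos (by linarith)]
    ring

theorem exists_measurable_ofReal_abs_sub_eq_tsub {α : Type*} [MeasurableSpace α] {f : α → ℝ}
    {K : α → ℝ≥0∞} (hf : Measurable f) (hK : Measurable K) :
    ∃ v : α → ℝ, Measurable v ∧ (∀ x, ENNReal.ofReal |v x| ≤ K x) ∧
      ∀ x, ENNReal.ofReal |f x - v x| = ENNReal.ofReal |f x| - K x := by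
  let m : α → ℝ := fun x => (min (ENNReal.ofReal |f x|) (K x)).toReal
  have hm : Measurable m := ((ENNReal.measurable_ofReal.comp hf.abs).min hK).ennreal_toReal
  have hm_nonneg (x : α) : 0 ≤ m x := ENNReal.toReal_nonneg
  have hm_ofReal (x : α) : ENNReal.ofReal (m x) = min (ENNReal.ofReal |f x|) (K x) :=
    ENNReal.ofReal_toReal (ne_top_of_le_ne_top ENNReal.ofReal_ne_top (min_le_left _ _))
  have hm_le (x : α) : m x ≤ |f x| := by
    rw [← ENNReal.ofReal_le_ofReal_iff (abs_nonneg _), hm_ofReal]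
    exact min_le_left _ _
  refine ⟨fun x => max (-m x) (min (f x) (m x)), hm.neg.max (hf.min hm), fun x => ?_, fun x => ?_⟩
  · calc ENNReal.ofReal |max (-m x) (min (f x) (m x))|
        ≤ ENNReal.ofReal (m x) := ENNReal.ofReal_le_ofReal (abs_max_neg_min_le (hm_nonneg x))
      _ ≤ K x := (hm_ofReal x).trans_le (min_le_right _ _)
  · rw [abs_sub_max_neg_min (hm_nonneg x) (hm_le x), ENNReal.ofReal_sub _ (hm_nonneg x), hm_ofReal,
      tsub_min]

end Truncation

section Interval

variable {a : ℝ≥0∞}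

theorem measurableSet_Iset (a : ℝ≥0∞) : MeasurableSet (Iset a) :=
  measurableSet_Ioi.inter (measurableSet_lt ENNReal.measurable_ofReal measurable_const)

theorem Iset_subset_Ioi (a : ℝ≥0∞) : Iset a ⊆ Ioi 0 := fun _ ht => ht.1

instance : SFinite (volI a) := inferInstanceAs (SFinite (volume.restrict (Iset a)))

instance : NullSingletonClass (volI a) :=
  inferInstanceAs (NullSingletonClass (volume.restrict (Iset a)))

theorem ae_mem_Iset (a : ℝ≥0∞) : ∀ᵐ t ∂volI a, t ∈ Iset a :=
  ae_restrict_mem (measurableSet_Iset a)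

theorem volI_univ (a : ℝ≥0∞) : volI a univ = a := by
  have hIset : Iset a = ENNReal.ofReal ⁻¹' Iio a ∩ Ioi 0 := inter_comm _ _
  rw [volI, Measure.restrict_apply_univ, hIset, ← Measure.restrict_apply' measurableSet_Ioi,
    volume_restrict_Ioi_preimage_ofReal (S := Iio a) (b := 0) (c := a)
      Ioo_subset_Iio_self fun t ht => ⟨bot_le, le_of_lt ht⟩, tsub_zero]

theorem measurable_rearr (μ : Measure ℝ) (f : ℝ → ℝ) : Measurable (rearr μ f) :=
  measurable_rearrE μ _

theorem lintegral_Iset_rearr_sub_rearr_le {f v : ℝ → ℝ} (hf : Measurable f) (hv : Measurable v) :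
    ∫⁻ t in Iset a, (rearr (volI a) f t - rearr (volI a) v t) ≤
      ∫⁻ x in Iset a, ENNReal.ofReal |f x - v x| := by
  simp only [rearr, rearrE_eq_decreasingRearrangement]
  refine (lintegral_mono_set (Iset_subset_Ioi a)).trans <|
    (lintegral_decreasingRearrangement_tsub_le (ENNReal.measurable_ofReal.comp hf.abs)
      (ENNReal.measurable_ofReal.comp hv.abs)).trans (lintegral_mono fun x => ?_)
  calc ENNReal.ofReal |f x| - ENNReal.ofReal |v x|
      = ENNReal.ofReal (|f x| - |v x|) := (ENNReal.ofReal_sub _ (abs_nonneg _)).symm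
    _ ≤ ENNReal.ofReal |f x - v x| :=
        ENNReal.ofReal_le_ofReal (abs_sub_abs_le_abs_sub _ _)

theorem setLIntegral_Ioi_decreasingRearrangement_volI_tsub_le (F : ℝ → ℝ≥0∞) (k : ℝ → ℝ≥0∞) :
    ∫⁻ t in Ioi (0 : ℝ), (decreasingRearrangement (volI a) F (ENNReal.ofReal t) - k t) ≤
      ∫⁻ t in Iset a, (rearrE (volI a) F t - k t) := by
  rw [← lintegral_indicator measurableSet_Ioi, ← lintegral_indicator (measurableSet_Iset a)]
  refine lintegral_mono fun t => indicator_le (fun t ht => ?_) t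
  by_cases hta : t ∈ Iset a
  · rw [indicator_of_mem hta, rearrE_eq_decreasingRearrangement]
  · have hat : a ≤ ENNReal.ofReal t := not_lt.1 fun h => hta ⟨ht, h⟩
    have hzero : decreasingRearrangement (volI a) F (ENNReal.ofReal t) ≤ 0 :=
      decreasingRearrangement_le_iff.2 <|
        (measure_mono (subset_univ _)).trans ((volI_univ a).trans_le hat)
    exact (tsub_le_self.trans hzero).trans bot_le

/-- `v` is `f` cut off at the height `φ` of the decreasing rank. -/
theorem exists_rearr_le_and_lintegral_sub_le {f : ℝ → ℝ} (hf : Measurable f) {φ : ℝ → ℝ≥0∞}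
    (hφ : AntitoneOn φ (Iset a)) :
    ∃ v : ℝ → ℝ, Measurable v ∧ (∀ t ∈ Iset a, rearr (volI a) v t ≤ φ t) ∧
      ∫⁻ x in Iset a, ENNReal.ofReal |f x - v x| ≤
        ∫⁻ t in Iset a, (rearr (volI a) f t - φ t) := by
  let F : ℝ → ℝ≥0∞ := fun x => ENNReal.ofReal |f x|
  let k := antitoneEnvelope φ (Iset a)
  have hF : Measurable F := ENNReal.measurable_ofReal.comp hf.abs
  have hk : Antitone k := antitone_antitoneEnvelope
  obtain ⟨v, hv, hv_le, hv_sub⟩ := exists_measurable_ofReal_abs_sub_eq_tsub hf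
    (hk.measurable.comp (measurable_decreasingRank (μ := volI a) hF))
  refine ⟨v, hv, fun t ht => rearrE_le_iff.2 ?_, ?_⟩
  · refine (measure_mono fun x hx => ?_).trans
      (measure_decreasingRank_le_le F (ENNReal.ofReal t))
    exact le_of_not_ge fun hrank =>
      hx.not_ge ((hv_le x).trans (antitoneEnvelope_le ht hrank))
  · calc ∫⁻ x in Iset a, ENNReal.ofReal |f x - v x|
        = ∫⁻ x, (F x - k (decreasingRank (volI a) F x)) ∂volI a := lintegral_congr hv_sub
      _ ≤ ∫⁻ t in Ioi (0 : ℝ),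
            (decreasingRearrangement (volI a) F (ENNReal.ofReal t) - k (ENNReal.ofReal t)) :=
          lintegral_tsub_comp_decreasingRank_le hF hk iInf_antitoneEnvelope_coe_le_top
      _ ≤ ∫⁻ t in Iset a, (rearr (volI a) f t - k (ENNReal.ofReal t)) :=
          setLIntegral_Ioi_decreasingRearrangement_volI_tsub_le F _
      _ ≤ ∫⁻ t in Iset a, (rearr (volI a) f t - φ t) :=
          setLIntegral_mono' (measurableSet_Iset a) fun t ht => tsub_le_tsub_left
            (le_antitoneEnvelope_ofReal hφ (fun r hr => le_of_lt hr.1) ht) _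

end Interval

section Gauges

/-- The cost of splitting `f*` at the height `C w`: the mass of `f*` above that height plus `C`.
Both gauges `Anorm` and `Bnorm` are obtained by minimizing it over `C`. -/
noncomputable def truncationCost (a : ℝ≥0∞) (w f : ℝ → ℝ) (C : ℝ≥0) : ℝ≥0∞ :=
  (∫⁻ t in Iset a, (rearr (volI a) f t - C * ENNReal.ofReal (w t))) + C

variable {a : ℝ≥0∞} {w f : ℝ → ℝ}

theorem antitoneOn_coe_mul_ofReal {s : Set ℝ} (hw_anti : AntitoneOn w s) (C : ℝ≥0) :
    AntitoneOn (fun t => C * ENNReal.ofReal (w t)) s := fun _ hs _ ht hst =>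
  mul_le_mul_right (ENNReal.ofReal_le_ofReal (hw_anti hs ht hst)) _

theorem ofReal_mul_eq_toNNReal_mul {C : ℝ} (hC : 0 ≤ C) (r : ℝ) :
    ENNReal.ofReal (C * r) = C.toNNReal * ENNReal.ofReal r :=
  ENNReal.ofReal_mul hC

theorem Bnorm_le_truncationCost (hw_anti : AntitoneOn w (Iset a)) (hf : Measurable f) (C : ℝ≥0) :
    Bnorm a w f ≤ truncationCost a w f C := by
  obtain ⟨v, hv, hv_rearr, hv_sub⟩ :=
    exists_rearr_le_and_lintegral_sub_le hf (antitoneOn_coe_mul_ofReal hw_anti C)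
  have hv_le : ∀ t ∈ Iset a, rearr (volI a) v t ≤ ENNReal.ofReal (C * w t) := fun t ht => by
    rw [ofReal_mul_eq_toNNReal_mul C.coe_nonneg, Real.toNNReal_coe]
    exact hv_rearr t ht
  calc Bnorm a w f
      ≤ (∫⁻ x in Iset a, ENNReal.ofReal |f x - v x|) + ENNReal.ofReal C :=
        sInf_le ⟨fun x => f x - v x, v, C, hf.sub hv, hv, C.coe_nonneg,
          Eventually.of_forall fun x => (sub_add_cancel _ _).symm, hv_le, rfl⟩
    _ ≤ truncationCost a w f C := add_le_add hv_sub ENNReal.ofReal_coe_nnreal.le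

theorem Bnorm_eq_iInf_truncationCost (hw_anti : AntitoneOn w (Iset a)) (hf : Measurable f) :
    Bnorm a w f = ⨅ C, truncationCost a w f C := by
  refine le_antisymm (le_iInf (Bnorm_le_truncationCost hw_anti hf)) (le_sInf ?_)
  rintro _ ⟨u, v, C, -, hv, hC, hfuv, hv_rearr, rfl⟩
  refine iInf_le_of_le C.toNNReal (add_le_add_left ?_ _)
  calc ∫⁻ t in Iset a, (rearr (volI a) f t - C.toNNReal * ENNReal.ofReal (w t))
      ≤ ∫⁻ t in Iset a, (rearr (volI a) f t - rearr (volI a) v t) :=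
        setLIntegral_mono' (measurableSet_Iset a) fun t ht => tsub_le_tsub_left
          ((hv_rearr t ht).trans_eq (ofReal_mul_eq_toNNReal_mul hC _)) _
    _ ≤ ∫⁻ x in Iset a, ENNReal.ofReal |f x - v x| := lintegral_Iset_rearr_sub_rearr_le hf hv
    _ = ∫⁻ x in Iset a, ENNReal.ofReal |u x| := by
        refine lintegral_congr_ae ?_
        filter_upwards [hfuv] with x hx
        rw [hx, add_sub_cancel_right]

theorem div_ofReal_tsub_mul_ofReal {q : ℝ≥0∞} {C : ℝ≥0} {r : ℝ} (hr : 0 < r) :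
    (q / ENNReal.ofReal r - C) * ENNReal.ofReal r = q - C * ENNReal.ofReal r := by
  rw [ENNReal.sub_mul fun _ _ => ENNReal.ofReal_ne_top,
    ENNReal.div_mul_cancel (ENNReal.ofReal_pos.2 hr).ne' ENNReal.ofReal_ne_top]

theorem ofReal_abs_toReal_le (q : ℝ≥0∞) : ENNReal.ofReal |q.toReal| ≤ q := by
  rw [abs_of_nonneg ENNReal.toReal_nonneg]
  exact ENNReal.ofReal_toReal_le

theorem ae_rearr_lt_top_of_truncationCost_ne_top (hw_meas : Measurable w) {C : ℝ≥0}
    (hC : truncationCost a w f C ≠ ∞) : ∀ᵐ t ∂volI a, rearr (volI a) f t < ∞ := by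
  have hexcess_meas : Measurable fun t => rearr (volI a) f t - C * ENNReal.ofReal (w t) :=
    (measurable_rearr _ _).sub (hw_meas.ennreal_ofReal.const_mul _)
  filter_upwards [ae_lt_top hexcess_meas (ENNReal.add_ne_top.1 hC).1] with t ht
  exact le_tsub_add.trans_lt
    (ENNReal.add_lt_top.2 ⟨ht, ENNReal.mul_lt_top ENNReal.coe_lt_top ENNReal.ofReal_lt_top⟩)

theorem Anorm_le_truncationCost (hw_pos : ∀ x ∈ Iset a, 0 < w x) (hw_meas : Measurable w)
    (C : ℝ≥0) : Anorm a w f ≤ truncationCost a w f C := by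
  rcases eq_or_ne (truncationCost a w f C) ∞ with htop | hfin
  · exact le_top.trans_eq htop.symm
  let q : ℝ → ℝ≥0∞ := fun t => rearr (volI a) f t / ENNReal.ofReal (w t)
  let g : ℝ → ℝ := fun t => (q t - C).toReal
  let h : ℝ → ℝ := fun t => (min (q t) C).toReal
  have hq : Measurable q := (measurable_rearr _ _).div hw_meas.ennreal_ofReal
  have hsplit : ∀ᵐ t ∂volI a, 0 ≤ g t + h t ∧ q t = ENNReal.ofReal (g t + h t) := by
    filter_upwards [ae_rearr_lt_top_of_truncationCost_ne_top hw_meas hfin, ae_mem_Iset a]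
      with t ht ht_mem
    have hqt : q t ≠ ∞ := (ENNReal.div_lt_top ht.ne (ENNReal.ofReal_pos.2 (hw_pos t ht_mem)).ne').ne
    refine ⟨add_nonneg ENNReal.toReal_nonneg ENNReal.toReal_nonneg, ?_⟩
    rw [ENNReal.ofReal_add ENNReal.toReal_nonneg ENNReal.toReal_nonneg,
      ENNReal.ofReal_toReal (ne_top_of_le_ne_top hqt tsub_le_self),
      ENNReal.ofReal_toReal (ne_top_of_le_ne_top hqt (min_le_left _ _)), tsub_add_min]
  unfold Anorm
  refine sInf_le_of_le ⟨g, h, (hq.sub_const _).ennreal_toReal,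
    (hq.min measurable_const).ennreal_toReal, hsplit, rfl⟩ (add_le_add ?_ ?_)
  · refine setLIntegral_mono' (measurableSet_Iset a) fun t ht => ?_
    rw [← div_ofReal_tsub_mul_ofReal (hw_pos t ht)]
    exact mul_le_mul_left (ofReal_abs_toReal_le _) _
  · exact essSup_le_of_ae_le _ <| Eventually.of_forall fun t =>
      (ofReal_abs_toReal_le _).trans (min_le_right _ _)

theorem ae_volI_of_ae_wMeas (hw_pos : ∀ x ∈ Iset a, 0 < w x) (hw_meas : Measurable w)
    {p : ℝ → Prop} (hp : ∀ᵐ t ∂wMeas (Iset a) w, p t) : ∀ᵐ t ∂volI a, p t := by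
  rw [wMeas, ae_withDensity_iff hw_meas.ennreal_ofReal] at hp
  filter_upwards [hp, ae_mem_Iset a] with t ht ht_mem
  exact ht (ENNReal.ofReal_pos.2 (hw_pos t ht_mem)).ne'

theorem Anorm_eq_iInf_truncationCost (hw_pos : ∀ x ∈ Iset a, 0 < w x) (hw_meas : Measurable w) :
    Anorm a w f = ⨅ C, truncationCost a w f C := by
  refine le_antisymm (le_iInf (Anorm_le_truncationCost hw_pos hw_meas)) (le_sInf ?_)
  rintro _ ⟨g, h, -, -, hgh, rfl⟩
  rcases eq_or_ne (essSup (fun t => ENNReal.ofReal |h t|) (wMeas (Iset a) w)) ∞ with htop | hfin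
  · simp [htop]
  lift essSup (fun t => ENNReal.ofReal |h t|) (wMeas (Iset a) w) to ℝ≥0 using hfin with C hC
  have hh : ∀ᵐ t ∂volI a, ENNReal.ofReal |h t| ≤ C :=
    ae_volI_of_ae_wMeas hw_pos hw_meas (hC ▸ ae_le_essSup)
  refine iInf_le_of_le C (add_le_add_left (lintegral_mono_ae ?_) _)
  filter_upwards [hgh, hh, ae_mem_Iset a] with t ⟨_, hq⟩ ht ht_mem
  rw [← div_ofReal_tsub_mul_ofReal (hw_pos t ht_mem), hq]
  refine mul_le_mul_left (tsub_le_iff_right.2 ?_) _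
  calc ENNReal.ofReal (g t + h t)
      ≤ ENNReal.ofReal |g t| + ENNReal.ofReal |h t| :=
        ENNReal.ofReal_add_le.trans
          (add_le_add (ENNReal.ofReal_le_ofReal (le_abs_self _))
            (ENNReal.ofReal_le_ofReal (le_abs_self _)))
    _ ≤ ENNReal.ofReal |g t| + C := add_le_add_right ht _

end Gauges

theorem stmt_15_general (a : ℝ≥0∞) (w : ℝ → ℝ) (hw_pos : ∀ x ∈ Iset a, 0 < w x)
    (hw_anti : AntitoneOn w (Iset a)) (hw_meas : Measurable w) (f : ℝ → ℝ) (hf : Measurable f) :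
    Anorm a w f = Bnorm a w f := by
  rw [Anorm_eq_iInf_truncationCost hw_pos hw_meas, Bnorm_eq_iInf_truncationCost hw_anti hf]

/-- For a non-increasing positive weight `w` with `W` finite on `I` and any
measurable `f` on `I`, `A(f) = B(f)`, i.e. `M_{L₁+L∞,w} = L₁ + M_{L∞,w}` with equal gauges. -/
theorem stmt_15 (a : ℝ≥0∞) (ha : 0 < a) (w : ℝ → ℝ)
    (hw_pos : ∀ x ∈ Iset a, 0 < w x) (hw_anti : AntitoneOn w (Iset a)) (hw_meas : Measurable w)
    (hW_fin : ∀ t ∈ Iset a, ∫⁻ s in Set.Ioo 0 t, ENNReal.ofReal (w s) ≠ ∞)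
    (f : ℝ → ℝ) (hf : Measurable f) :
    Anorm a w f = Bnorm a w f :=
  stmt_15_general a w hw_pos hw_anti hw_meas f hf
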